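/- If θ ∈ ℝ^N is nonnegative, Σ_n θ[n] = (L+S)·ρ with ρ > 0, and θ[n] ≤ ρ for all n, and moreover the number N' of nonzero entries of θ satisfies N' ≥ L+S+1, then after one step of the filling procedure — which selects the index o[1] of the smallest nonzero entry together with the L+S−1 largest nonzero entries, and subtracts γ₁ = min( (Σ_i θ[i])/(L+S) − θ[o[N'−(L+S)+1]], θ[o[1]] ) from each selected entry — the resulting vector θ' remains nonnegative, satisfies Σ_n θ'[n] = (L+S)(ρ − γ₁), and satisfies θ'[n] ≤ ρ − γ₁ for all n. -/

import Mathlib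

/-!
The set `U` has exactly `L + S` elements (`card_selected`), so subtracting `γ₁` on `U` lowers the
total by `(L + S) γ₁`. Selected entries are at least the smallest nonzero entry, hence at least
`γ₁`, so they stay nonnegative, and they end at most `ρ - γ₁` because they were at most `ρ`. An
unselected nonzero entry is at most the largest unselected one, `θ (o (N' - (L + S)))` in zero-based
indexing, which is at most `ρ - γ₁` by the choice of `γ₁`; an unselected zero entry is at most
that one because `θ` is nonnegative.
-/

open Finset

/-- The positions selected by one filling step, the first one and the last `k - 1` ones among `m`,
are `k` in number. -/
theorem card_selected (m k : ℕ) (hk : 0 < k) (hkm : k + 1 ≤ m) :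
    (Finset.univ.filter (fun i : Fin m => i.val = 0 ∨ m - k + 1 ≤ i.val)).card = k := by
  have h : (Finset.univ.filter (fun i : Fin m => i.val = 0 ∨ m - k + 1 ≤ i.val)).map
      Fin.valEmbedding = insert 0 (Finset.Ico (m - k + 1) m) := by
    ext x
    simp only [Finset.mem_map, Finset.mem_filter, Finset.mem_univ, true_and,
      Fin.valEmbedding_apply, Finset.mem_insert, Finset.mem_Ico]
    constructor
    · rintro ⟨i, hi, rfl⟩
      have := i.isLt
      omega
    · intro hx
      exact ⟨⟨x, by omega⟩, by simp only; omega, rfl⟩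
  rw [← Finset.card_map Fin.valEmbedding, h, Finset.card_insert_of_notMem (by simp),
    Nat.card_Ico]
  omega

/-- one step of the filling procedure.  With N' ≥ L+S+1 nonzero
entries sorted ascending by o, subtracting
γ₁ = min((Σθ)/(L+S) − θ[o[N'−(L+S)+1]], θ[o[1]]) from the smallest nonzero
entry and the L+S−1 largest entries keeps the vector nonnegative, with new sum
(L+S)(ρ−γ₁) and all entries at most ρ−γ₁. -/
theorem stmt3 (L S N : ℕ) (hLS : 0 < L + S)
    (θ : Fin N → ℝ) (hθ0 : ∀ n, 0 ≤ θ n)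
    (ρ : ℝ) (hρ : 0 < ρ) (hsum : ∑ n, θ n = (L + S : ℝ) * ρ)
    (hθρ : ∀ n, θ n ≤ ρ)
    (N' : ℕ) (hN'def : N' = (Finset.univ.filter (fun n => θ n ≠ 0)).card)
    (hN' : L + S + 1 ≤ N')
    (o : Fin N' → Fin N) (ho_inj : Function.Injective o)
    (ho_range : ∀ n, θ n ≠ 0 ↔ n ∈ Set.range o)
    (ho_mono : Monotone (fun i => θ (o i)))
    (γ₁ : ℝ)
    (hγ₁ : γ₁ = min (ρ - θ (o ⟨N' - (L + S), by omega⟩)) (θ (o ⟨0, by omega⟩)))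
    (U : Finset (Fin N))
    (hU : U = (Finset.univ.filter
        (fun i : Fin N' => i.val = 0 ∨ N' - (L + S) + 1 ≤ i.val)).image o)
    (θ' : Fin N → ℝ)
    (hθ' : ∀ n, θ' n = if n ∈ U then θ n - γ₁ else θ n) :
    (∀ n, 0 ≤ θ' n) ∧ (∑ n, θ' n = (L + S : ℝ) * (ρ - γ₁)) ∧
      (∀ n, θ' n ≤ ρ - γ₁) := by
  have hγ_top : γ₁ ≤ ρ - θ (o ⟨N' - (L + S), by omega⟩) := hγ₁ ▸ min_le_left _ _
  have hγ_min : γ₁ ≤ θ (o ⟨0, by omega⟩) := hγ₁ ▸ min_le_right _ _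
  have hcard : U.card = L + S := by
    rw [hU, Finset.card_image_of_injective _ ho_inj]
    exact card_selected N' (L + S) hLS hN'
  refine ⟨fun n => ?_, ?_, fun n => ?_⟩
  · rw [hθ']
    split_ifs with hn
    · rw [hU, Finset.mem_image] at hn
      obtain ⟨i, -, rfl⟩ := hn
      have h : θ (o ⟨0, by omega⟩) ≤ θ (o i) := ho_mono (Fin.mk_le_of_le_val (Nat.zero_le _))
      linarith
    · exact hθ0 n
  · have h : ∀ n, θ' n = θ n - if n ∈ U then γ₁ else 0 := by
      intro n
      rw [hθ']
      split_ifs <;> simp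
    simp only [h, Finset.sum_sub_distrib, hsum, Finset.sum_ite_mem, Finset.univ_inter,
      Finset.sum_const, hcard, nsmul_eq_mul]
    push_cast
    ring
  · rw [hθ']
    split_ifs with hn
    · linarith [hθρ n]
    · by_cases hz : θ n = 0
      · linarith [hθ0 (o ⟨N' - (L + S), by omega⟩)]
      · obtain ⟨i, rfl⟩ := (ho_range n).1 hz
        have hi : ¬ (i.val = 0 ∨ N' - (L + S) + 1 ≤ i.val) := fun hi =>
          hn (hU ▸ Finset.mem_image_of_mem o (by simpa using hi))
        have h : θ (o i) ≤ θ (o ⟨N' - (L + S), by omega⟩) :=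
          ho_mono (Fin.le_def.2 (by simp only; omega))
        linarith
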